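/- arXiv:1801.03158 — 3 statements merged into one kernel-verified Lean document; each statement's English description precedes it below -/
import Mathlib

section
/- Let 𝒟 be a finite set of pairwise intersecting closed disks (closed balls of positive radius) in the Euclidean plane ℝ². Then there exists a set P of at most five points in ℝ² such that every disk in 𝒟 contains at least one point of P. -/
/-- The elementary covering computation: a disk centred at `(X, Y)` of radius `r`, missing the
origin, contains one of `(±2, 0)`, `(0, ±5/2)`. -/
lemma stab_geom_pos (X Y r : ℝ) (hX : 0 ≤ X) (hY : 0 ≤ Y) (hr : 1 ≤ r)
    (h0 : r ^ 2 < X ^ 2 + Y ^ 2) (h1 : X ^ 2 + Y ^ 2 ≤ (r + 1) ^ 2)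
    (h : Y ≤ r - 1 ∨ X ^ 2 + Y ^ 2 ≤ 4 * (r - 1) ^ 2) :
    (X - 2) ^ 2 + Y ^ 2 ≤ r ^ 2 ∨ X ^ 2 + (Y - 5 / 2) ^ 2 ≤ r ^ 2 := by
  by_contra hcon
  push Not at hcon
  obtain ⟨n1, n2⟩ := hcon
  obtain ⟨k, hk⟩ : ∃ k, k = X ^ 2 + Y ^ 2 - r ^ 2 := ⟨_, rfl⟩
  have k0 : 0 < k := by linarith
  have k1 : k ≤ 2 * r + 1 := by nlinarith
  have hx : X < 1 + k / 4 := by nlinarith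
  have hy : Y < 5 / 4 + k / 5 := by nlinarith
  have hx2 : X ^ 2 < (1 + k / 4) ^ 2 := by
    apply pow_lt_pow_left₀ hx hX (by norm_num)
  have hy2 : Y ^ 2 < (5 / 4 + k / 5) ^ 2 := by
    apply pow_lt_pow_left₀ hy hY (by norm_num)
  have key : r ^ 2 < 41 / 16 + 41 / 400 * k ^ 2 := by nlinarith
  have hk2 : k ^ 2 ≤ (2 * r + 1) ^ 2 := pow_le_pow_left₀ k0.le k1 2
  have hr3 : r < 251 / 100 := by
    have hq : r ^ 2 < 41 / 16 + 41 / 400 * (2 * r + 1) ^ 2 := by linarith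
    clear hk2 key hy2 hx2 hy hx k1 k0 hk n1 n2 h h1 h0
    by_contra hc
    push Not at hc
    nlinarith [mul_nonneg (sub_nonneg.2 hc) (sub_nonneg.2 hr)]
  rcases h with h | h
  · have hyy : Y ^ 2 ≤ (r - 1) ^ 2 := pow_le_pow_left₀ hY h 2
    have hlt : (k + 2 * r - 1) < (1 + k / 4) ^ 2 := by linarith
    have hkk : k ^ 2 ≤ k * (2 * r + 1) := by rw [sq]; exact mul_le_mul_of_nonneg_left k1 k0.le
    have hkr : k * r ≤ k * (251 / 100) := mul_le_mul_of_nonneg_left hr3.le k0.le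
    linarith
  · have hk4 : k ≤ (3 * r - 2) * (r - 2) := by linarith
    have hr2 : 2 < r := by
      by_contra hc
      have : (3 * r - 2) * (r - 2) ≤ 0 :=
        mul_nonpos_of_nonneg_of_nonpos (by linarith) (by linarith)
      linarith
    have hk3 : k ≤ 3 := by
      have : (3 * r - 2) * (r - 2) ≤ (553 / 100) * (51 / 100) :=
        mul_le_mul (by linarith) (by linarith) (by linarith) (by norm_num)
      linarith
    have hk9 : k ^ 2 ≤ 3 ^ 2 := pow_le_pow_left₀ k0.le hk3 2
    have hr4 : (2 : ℝ) ^ 2 < r ^ 2 := pow_lt_pow_left₀ hr2 (by norm_num) (by norm_num)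
    linarith

lemma stab_geom (X Y r : ℝ) (hr : 1 ≤ r)
    (h0 : r ^ 2 < X ^ 2 + Y ^ 2) (h1 : X ^ 2 + Y ^ 2 ≤ (r + 1) ^ 2)
    (h : |Y| ≤ r - 1 ∨ X ^ 2 + Y ^ 2 ≤ 4 * (r - 1) ^ 2) :
    (X - 2) ^ 2 + Y ^ 2 ≤ r ^ 2 ∨ (X + 2) ^ 2 + Y ^ 2 ≤ r ^ 2 ∨
      X ^ 2 + (Y - 5 / 2) ^ 2 ≤ r ^ 2 ∨ X ^ 2 + (Y + 5 / 2) ^ 2 ≤ r ^ 2 := by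
  have := stab_geom_pos |X| |Y| r (abs_nonneg _) (abs_nonneg _) hr (by simpa using h0)
    (by simpa using h1) (by simpa using h)
  rcases abs_cases X with ⟨hx, _⟩ | ⟨hx, _⟩ <;> rcases abs_cases Y with ⟨hy, _⟩ | ⟨hy, _⟩ <;>
    rw [hx, hy] at this <;> rcases this with h | h
  · left; linarith
  · right; right; left; linarith
  · left; linarith
  · right; right; right; linarith
  · right; left; linarith
  · right; right; left; linarith
  · right; left; linarith
  · right; right; right; linarith

/-- Scaled version. -/
lemma stab_geom_scaled (X Y r ρ : ℝ) (hρ : 0 < ρ) (hr : ρ ≤ r)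
    (h0 : r ^ 2 < X ^ 2 + Y ^ 2) (h1 : X ^ 2 + Y ^ 2 ≤ (r + ρ) ^ 2)
    (h : |Y| ≤ r - ρ ∨ X ^ 2 + Y ^ 2 ≤ 4 * (r - ρ) ^ 2) :
    (X - 2 * ρ) ^ 2 + Y ^ 2 ≤ r ^ 2 ∨ (X + 2 * ρ) ^ 2 + Y ^ 2 ≤ r ^ 2 ∨
      X ^ 2 + (Y - 5 / 2 * ρ) ^ 2 ≤ r ^ 2 ∨ X ^ 2 + (Y + 5 / 2 * ρ) ^ 2 ≤ r ^ 2 := by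
  obtain ⟨x, rfl⟩ : ∃ x, X = x * ρ := ⟨X / ρ, by field_simp⟩
  obtain ⟨y, rfl⟩ : ∃ y, Y = y * ρ := ⟨Y / ρ, by field_simp⟩
  obtain ⟨t, rfl⟩ : ∃ t, r = t * ρ := ⟨r / ρ, by field_simp⟩
  have hρ2 : 0 < ρ ^ 2 := by positivity
  have := stab_geom x y t (by nlinarith)
    (by rw [← mul_lt_mul_iff_left₀ hρ2]; linarith)
    (by rw [← mul_le_mul_iff_left₀ hρ2]; linarith)
    (by
      refine h.imp (fun h => ?_) (fun h => ?_)
      · rw [abs_mul, abs_of_pos hρ] at h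
        rw [← mul_le_mul_iff_left₀ hρ]; linarith
      · rw [← mul_le_mul_iff_left₀ hρ2]; linarith)
  rcases this with h | h | h | h <;> have h := mul_le_mul_of_nonneg_right h hρ2.le
  · left; linarith
  · right; left; linarith
  · right; right; left; linarith
  · right; right; right; linarith

/-- If `w` lies in the cone of two unit vectors at angle at most 120 degrees and has inner product
at most `s` with both, then `|w| ≤ 2 s`. -/
lemma stab_cone (p q p' q' x y s : ℝ) (h1 : p ^ 2 + q ^ 2 = 1) (h2 : p' ^ 2 + q' ^ 2 = 1)
    (hk : -1 / 2 ≤ p * p' + q * q') (hx : 0 ≤ x) (hy : 0 ≤ y) (hs : 0 ≤ s)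
    (ha : (x * p + y * p') * p + (x * q + y * q') * q ≤ s)
    (hc : (x * p + y * p') * p' + (x * q + y * q') * q' ≤ s) :
    (x * p + y * p') ^ 2 + (x * q + y * q') ^ 2 ≤ 4 * s ^ 2 := by
  obtain ⟨k, hkk⟩ : ∃ k, k = p * p' + q * q' := ⟨_, rfl⟩
  have ha' : x + y * k ≤ s := by rw [hkk]; linear_combination ha - x * h1
  have hc' : x * k + y ≤ s := by rw [hkk]; linear_combination hc - y * h2
  have hk' : -1 / 2 ≤ k := by rw [hkk]; exact hk
  have e : (x * p + y * p') ^ 2 + (x * q + y * q') ^ 2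
      = x * (x + y * k) + y * (x * k + y) := by
    rw [hkk]; linear_combination x ^ 2 * h1 + y ^ 2 * h2
  rw [e]
  have hxy : x + y ≤ 4 * s := by
    nlinarith [mul_nonneg (add_nonneg hx hy) (by linarith : 0 ≤ k + 1 / 2)]
  nlinarith [mul_le_mul_of_nonneg_left ha' hx, mul_le_mul_of_nonneg_left hc' hy]

/-- One half of the dichotomy (the half plane `X ≥ 0`). -/
lemma stab_dich_right (p q p' q' α β X Y s : ℝ) (h1 : p ^ 2 + q ^ 2 = 1)
    (h2 : p' ^ 2 + q' ^ 2 = 1)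
    (hk : -1 / 2 ≤ p * p' + q * q') (hα : 0 ≤ α) (hβ : 0 ≤ β)
    (e1 : α * p + β * p' = 0) (e2 : α * q + β * q' = 1) (hs : 0 ≤ s) (hp : 0 ≤ p)
    (ha : X * p + Y * q ≤ s) (hc : X * p' + Y * q' ≤ s) (hX : 0 ≤ X) (hY : s < Y) :
    X ^ 2 + Y ^ 2 ≤ 4 * s ^ 2 := by
  have hY0 : 0 < Y := by linarith
  by_cases hcr : X * q ≤ Y * p
  · rcases hp.eq_or_lt with hp0 | hp0
    · -- `p = 0`
      rw [← hp0] at hcr ha h1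
      have hq : q ^ 2 = 1 := by linarith
      rcases (show q = 1 ∨ q = -1 from by simpa using hq) with rfl | rfl
      · exfalso; linarith
      · -- q = -1
        exfalso
        rw [← hp0] at e1 hk
        have hβ0 : 0 < β := by
          rcases hβ.eq_or_lt with h | h
          · rw [← h] at e2; linarith
          · exact h
        have hp' : p' = 0 := by
          have : β * p' = 0 := by linarith
          rcases mul_eq_zero.1 this with h | h
          · exact absurd h hβ0.ne'
          · exact h
        rw [hp'] at h2 hk
        have : q' ≤ 1 / 2 := by linarith
        nlinarith
    · -- w = (X/p) u_a + z e
      have e : ∃ x y : ℝ, 0 ≤ x ∧ 0 ≤ y ∧ X = x * p + y * p' ∧ Y = x * q + y * q' := by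
        have hz : 0 ≤ (Y * p - X * q) / p := div_nonneg (by linarith) hp0.le
        refine ⟨X / p + (Y * p - X * q) / p * α, (Y * p - X * q) / p * β, by positivity,
          by positivity, ?_, ?_⟩
        · have : X = X / p * p + (Y * p - X * q) / p * (α * p + β * p') := by
            rw [e1]; field_simp; ring
          linarith
        · have : Y = X / p * q + (Y * p - X * q) / p * (α * q + β * q') := by
            rw [e2]; field_simp; ring
          linarith
      obtain ⟨x, y, hx, hy, rfl, rfl⟩ := e
      exact stab_cone p q p' q' x y s h1 h2 hk hx hy hs ha hc
  · exfalso
    push Not at hcr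
    have hq : 0 < q := by
      by_contra hq
      push Not at hq
      nlinarith [mul_nonneg hY0.le hp, mul_nonneg hX (neg_nonneg.2 hq)]
    have hq1 : q ≤ 1 := by nlinarith
    have : Y ≤ q * (X * p + Y * q) := by
      have : q * (X * p + Y * q) - Y = p * (X * q - Y * p) := by linear_combination Y * h1
      nlinarith
    nlinarith

lemma stab_dich (p q p' q' α β X Y s : ℝ) (h1 : p ^ 2 + q ^ 2 = 1)
    (h2 : p' ^ 2 + q' ^ 2 = 1)
    (hk : -1 / 2 ≤ p * p' + q * q') (hα : 0 ≤ α) (hβ : 0 ≤ β)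
    (e1 : α * p + β * p' = 0) (e2 : α * q + β * q' = 1) (hs : 0 ≤ s)
    (ha : X * p + Y * q ≤ s) (hc : X * p' + Y * q' ≤ s) (hY : s < Y) :
    X ^ 2 + Y ^ 2 ≤ 4 * s ^ 2 := by
  have hpp : p * p' ≤ 0 := by
    by_contra hpos
    push Not at hpos
    have t1 : α * p ^ 2 + β * (p * p') = 0 := by linear_combination p * e1
    have t2 : α * (p * p') + β * p' ^ 2 = 0 := by linear_combination p' * e1
    have hp2 : 0 < p ^ 2 := by
      have : p ≠ 0 := by rintro rfl; simp at hpos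
      positivity
    have b0 : β * (p * p') = 0 := by nlinarith [mul_nonneg hα hp2.le, mul_nonneg hβ hpos.le]
    have a0 : α * p ^ 2 = 0 := by linarith
    have hb : β = 0 := by
      rcases mul_eq_zero.1 b0 with h | h
      · exact h
      · exact absurd h hpos.ne'
    have ha : α = 0 := by
      rcases mul_eq_zero.1 a0 with h | h
      · exact h
      · exact absurd h hp2.ne'
    rw [ha, hb] at e2
    linarith
  have hcases : (0 ≤ p ∧ p' ≤ 0) ∨ (p ≤ 0 ∧ 0 ≤ p') := by
    rcases mul_nonpos_iff.1 hpp with h | h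
    · exact Or.inl h
    · exact Or.inr h
  rcases hcases with ⟨hp, hp'⟩ | ⟨hp, hp'⟩ <;> rcases le_total 0 X with hX | hX
  · exact stab_dich_right p q p' q' α β X Y s h1 h2 hk hα hβ e1 e2 hs hp ha hc hX hY
  · have := stab_dich_right (-p') q' (-p) q β α (-X) Y s (by linarith) (by linarith)
      (by linarith) hβ hα (by linarith) (by linarith) hs (by linarith) (by linarith)
      (by linarith) (by linarith) hY
    linarith
  · exact (by
      have := stab_dich_right p' q' p q β α X Y s (by linarith) (by linarith)
        (by linarith) hβ hα (by linarith) (by linarith) hs (by linarith) (by linarith)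
        (by linarith) (by linarith) hY
      linarith)
  · have := stab_dich_right (-p) q (-p') q' α β (-X) Y s (by linarith) (by linarith)
      (by linarith) hα hβ (by linarith) (by linarith) hs (by linarith) (by linarith)
      (by linarith) (by linarith) hY
    linarith

/-- Two of the three directions are at angle at most 120 degrees; use the third as an axis. -/
lemma stab_axis_aux (a b p q p' q' l m n : ℝ) (h0 : a ^ 2 + b ^ 2 = 1) (h1 : p ^ 2 + q ^ 2 = 1)
    (h2 : p' ^ 2 + q' ^ 2 = 1) (hk : -1 / 2 ≤ p * p' + q * q') (hl : 0 ≤ l) (hm : 0 ≤ m)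
    (hn : 0 ≤ n) (hsum : l + m + n = 1) (e1 : l * a + m * p + n * p' = 0)
    (e2 : l * b + m * q + n * q' = 0) :
    ∀ x y s : ℝ, -s ≤ x * a + y * b → -s ≤ x * p + y * q → -s ≤ x * p' + y * q' →
      0 ≤ s ∧ (|x * a + y * b| ≤ s ∨ x ^ 2 + y ^ 2 ≤ 4 * s ^ 2) := by
  intro x y s g0 g1 g2
  have hs : 0 ≤ s := by
    have : l * (x * a + y * b) + m * (x * p + y * q) + n * (x * p' + y * q') = 0 := by
      linear_combination x * e1 + y * e2
    have t : l * (-s) + m * (-s) + n * (-s) = -s := by linear_combination (-s) * hsum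
    linarith [mul_le_mul_of_nonneg_left g0 hl, mul_le_mul_of_nonneg_left g1 hm,
      mul_le_mul_of_nonneg_left g2 hn]
  refine ⟨hs, ?_⟩
  have hl0 : 0 < l := by
    rcases hl.eq_or_lt with h | h
    · exfalso
      rw [← h] at e1 e2 hsum
      have t1 : m + n * (p * p' + q * q') = 0 := by
        linear_combination p * e1 + q * e2 - m * h1
      have t2 : m * (p * p' + q * q') + n = 0 := by
        linear_combination p' * e1 + q' * e2 - n * h2
      nlinarith
    · exact h
  by_cases hY : |x * a + y * b| ≤ s
  · exact Or.inl hY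
  right
  have hY' : s < x * a + y * b := by
    by_contra hc
    exact hY (abs_le.2 ⟨g0, by linarith⟩)
  -- rotated coordinates with second axis `-(a, b)`; `w = -(x, y)`
  have := stab_dich (-p * b + q * a) (-p * a - q * b) (-p' * b + q' * a) (-p' * a - q' * b)
    (m / l) (n / l) (x * b - y * a) (x * a + y * b) s
    (by linear_combination (p ^ 2 + q ^ 2) * h0 + h1)
    (by linear_combination (p' ^ 2 + q' ^ 2) * h0 + h2)
    (by
      have : (-p * b + q * a) * (-p' * b + q' * a) + (-p * a - q * b) * (-p' * a - q' * b)
        = p * p' + q * q' := by linear_combination (p * p' + q * q') * h0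
      rw [this]; exact hk)
    (by positivity) (by positivity)
    (by field_simp; linear_combination -b * e1 + a * e2)
    (by field_simp; linear_combination -a * e1 - b * e2 + l * h0) hs
    (by
      have : (x * b - y * a) * (-p * b + q * a) + (x * a + y * b) * (-p * a - q * b)
        = -(x * p + y * q) := by linear_combination -(x * p + y * q) * h0
      linarith)
    (by
      have : (x * b - y * a) * (-p' * b + q' * a) + (x * a + y * b) * (-p' * a - q' * b)
        = -(x * p' + y * q') := by linear_combination -(x * p' + y * q') * h0
      linarith) hY'
  have e : (x * b - y * a) ^ 2 + (x * a + y * b) ^ 2 = x ^ 2 + y ^ 2 := by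
    linear_combination (x ^ 2 + y ^ 2) * h0
  linarith

lemma stab_axis (a b p q p' q' l m n : ℝ) (h0 : a ^ 2 + b ^ 2 = 1) (h1 : p ^ 2 + q ^ 2 = 1)
    (h2 : p' ^ 2 + q' ^ 2 = 1) (hl : 0 ≤ l) (hm : 0 ≤ m)
    (hn : 0 ≤ n) (hsum : l + m + n = 1) (e1 : l * a + m * p + n * p' = 0)
    (e2 : l * b + m * q + n * q' = 0) :
    ∃ e f : ℝ, e ^ 2 + f ^ 2 = 1 ∧
    ∀ x y s : ℝ, -s ≤ x * a + y * b → -s ≤ x * p + y * q → -s ≤ x * p' + y * q' →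
      0 ≤ s ∧ (|x * e + y * f| ≤ s ∨ x ^ 2 + y ^ 2 ≤ 4 * s ^ 2) := by
  by_cases k1 : -1 / 2 ≤ p * p' + q * q'
  · exact ⟨a, b, h0, stab_axis_aux a b p q p' q' l m n h0 h1 h2 k1 hl hm hn hsum e1 e2⟩
  by_cases k2 : -1 / 2 ≤ a * p' + b * q'
  · exact ⟨p, q, h1, fun x y s g0 g1 g2 => stab_axis_aux p q a b p' q' m l n h1 h0 h2 k2 hm hl hn
      (by linarith) (by linarith) (by linarith) x y s g1 g0 g2⟩
  refine ⟨p', q', h2, fun x y s g0 g1 g2 => stab_axis_aux p' q' p q a b n m l h2 h1 h0 ?_ hn hm hl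
      (by linarith) (by linarith) (by linarith) x y s g2 g1 g0⟩
  nlinarith [sq_nonneg (a + p + p'), sq_nonneg (b + q + q')]

/-- The optimal point: either it stabs everything, or it is at equal distance `ρ` from the disks in
a set of directions having `0` in its convex hull. -/
lemma stab_opt {ι : Type*} [Fintype ι] [Nonempty ι]
    (c : ι → EuclideanSpace ℝ (Fin 2)) (r : ι → ℝ) :
    ∃ (O : EuclideanSpace ℝ (Fin 2)) (ρ : ℝ), (∀ i, dist O (c i) ≤ r i + ρ) ∧
      ∀ v : EuclideanSpace ℝ (Fin 2), ∃ i, dist O (c i) = r i + ρ ∧ inner ℝ v (c i - O) ≤ 0 := by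
  let F : EuclideanSpace ℝ (Fin 2) → ℝ := fun p =>
    Finset.univ.sup' Finset.univ_nonempty (fun i => dist p (c i) - r i)
  have hF : Continuous F := by
    apply Continuous.finset_sup'_apply
    intro i _
    fun_prop
  have hge : ∀ p i, dist p (c i) - r i ≤ F p := fun p i =>
    Finset.le_sup' (fun i => dist p (c i) - r i) (Finset.mem_univ i)
  have hco : Filter.Tendsto F (Filter.cocompact _) Filter.atTop := by
    obtain ⟨i0⟩ := ‹Nonempty ι›
    refine Filter.tendsto_atTop_mono (fun p => hge p i0) ?_
    exact Filter.tendsto_atTop_add_const_right _ (-(r i0))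
      (tendsto_dist_right_cocompact_atTop (c i0))
  obtain ⟨O, hO⟩ := hF.exists_forall_le hco
  refine ⟨O, F O, fun i => by linarith [hge O i], ?_⟩
  intro v
  by_contra hcon
  push Not at hcon
  have hev : ∀ i, ∀ᶠ ε in nhdsWithin (0 : ℝ) (Set.Ioi 0), dist (O + ε • v) (c i) - r i < F O := by
    intro i
    rcases (hge O i).lt_or_eq with hlt | heq
    · have hcont : Continuous fun ε : ℝ => dist (O + ε • v) (c i) - r i := by fun_prop
      have : ∀ᶠ ε in nhds (0 : ℝ), dist (O + ε • v) (c i) - r i < F O := by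
        apply (hcont.tendsto 0).eventually_lt_const
        simpa using hlt
      exact this.filter_mono nhdsWithin_le_nhds
    · have hpos := hcon i (by linarith)
      have hcont : Continuous fun ε : ℝ => ε * ‖v‖ ^ 2 := by fun_prop
      have : ∀ᶠ ε in nhds (0 : ℝ), ε * ‖v‖ ^ 2 < 2 * inner ℝ v (c i - O) := by
        apply (hcont.tendsto 0).eventually_lt_const
        simpa using hpos
      filter_upwards [this.filter_mono nhdsWithin_le_nhds, self_mem_nhdsWithin] with ε h1 h2
      have h2 : 0 < ε := h2
      have : dist (O + ε • v) (c i) < dist O (c i) := by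
        apply lt_of_pow_lt_pow_left₀ 2 dist_nonneg
        rw [dist_eq_norm, dist_eq_norm]
        have e : O + ε • v - c i = ε • v - (c i - O) := by abel
        rw [e, norm_sub_sq_real, norm_sub_rev O, norm_smul, inner_smul_left, mul_pow]
        simp only [Real.norm_eq_abs, sq_abs, conj_trivial]
        nlinarith
      linarith
  obtain ⟨ε, hε⟩ := (Filter.eventually_all.2 hev).exists
  have : F (O + ε • v) < F O := by
    simp only [F]
    rw [Finset.sup'_lt_iff]
    intro i _
    exact hε i
  exact absurd (hO _) (not_le.2 this)

/-- Carathéodory in the plane, with explicit coefficients. -/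
lemma stab_carath (A : Set (EuclideanSpace ℝ (Fin 2))) (hA : A.Finite)
    (h : ∀ v : EuclideanSpace ℝ (Fin 2), ∃ u ∈ A, inner ℝ v u ≤ 0) :
    ∃ u ∈ A, ∃ v ∈ A, ∃ w ∈ A, ∃ l m n : ℝ, 0 ≤ l ∧ 0 ≤ m ∧ 0 ≤ n ∧ l + m + n = 1 ∧
      l • u + m • v + n • w = 0 := by
  have h0 : (0 : EuclideanSpace ℝ (Fin 2)) ∈ convexHull ℝ A := by
    by_contra hc
    obtain ⟨f, t, hf0, hf⟩ := geometric_hahn_banach_point_closed (convex_convexHull ℝ A)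
      (hA.isClosed_convexHull ℝ) hc
    obtain ⟨u, hu, hle⟩ := h ((InnerProductSpace.toDual ℝ _).symm f)
    rw [InnerProductSpace.toDual_symm_apply] at hle
    have := hf u (subset_convexHull ℝ A hu)
    simp at hf0
    linarith
  rw [convexHull_eq_union] at h0
  simp only [Set.mem_iUnion] at h0
  obtain ⟨t, htA, hind, h0⟩ := h0
  have hcard : t.card ≤ 3 := by
    have := hind.card_le_finrank_succ
    have h2 : Module.finrank ℝ (vectorSpan ℝ (Set.range ((↑) : t → EuclideanSpace ℝ (Fin 2)))) ≤ 2 := by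
      refine (Submodule.finrank_le _).trans ?_
      simp
    simp only [Fintype.card_coe] at this
    omega
  obtain ⟨u, v, w, ht⟩ : ∃ u v w, (t : Set (EuclideanSpace ℝ (Fin 2))) = {u, v, w} := by
    have hne : t.Nonempty := by
      rw [Finset.nonempty_iff_ne_empty]
      rintro rfl
      simp at h0
    have hpos := hne.card_pos
    have : t.card = 1 ∨ t.card = 2 ∨ t.card = 3 := by omega
    rcases this with h | h | h
    · obtain ⟨a, rfl⟩ := Finset.card_eq_one.1 h
      exact ⟨a, a, a, by simp⟩
    · obtain ⟨a, b, -, rfl⟩ := Finset.card_eq_two.1 h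
      exact ⟨a, b, b, by simp⟩
    · obtain ⟨a, b, d, -, -, -, rfl⟩ := Finset.card_eq_three.1 h
      exact ⟨a, b, d, by simp⟩
  rw [ht] at h0 htA
  rw [convexHull_insert (by simp), convexHull_pair, mem_convexJoin] at h0
  obtain ⟨x, hx, y, ⟨a, b, ha, hb, hab, rfl⟩, ⟨d, e, hd, he, hde, hz⟩⟩ := h0
  rw [Set.mem_singleton_iff] at hx
  subst hx
  refine ⟨x, htA (by simp), v, htA (by simp), w, htA (by simp), d, e * a, e * b, hd,
    by positivity, by positivity, by rw [add_assoc, ← mul_add, hab]; linarith, ?_⟩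
  rw [← hz, smul_add, smul_smul, smul_smul, add_assoc]


/-- **Five piercing points for pairwise intersecting disks.**
Let `𝒟` be a finite family of pairwise intersecting closed disks (closed balls of
positive radius) in the Euclidean plane `ℝ²`.  Then there is a set `P` of at most
five points such that every disk of the family contains at least one point of `P`. -/
theorem five_points_stab_pairwise_intersecting_disks
    (ι : Type*) [Fintype ι]
    (c : ι → EuclideanSpace ℝ (Fin 2)) (r : ι → ℝ)
    (hr : ∀ i, 0 < r i)
    (hint : ∀ i j, (Metric.closedBall (c i) (r i) ∩ Metric.closedBall (c j) (r j)).Nonempty) :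
    ∃ P : Finset (EuclideanSpace ℝ (Fin 2)), P.card ≤ 5 ∧
      ∀ i, ∃ p ∈ P, p ∈ Metric.closedBall (c i) (r i) := by
  classical
  rcases isEmpty_or_nonempty ι with hι | hι
  · exact ⟨∅, by simp, fun i => (hι.false i).elim⟩
  obtain ⟨O, ρ, hO, hopt⟩ := stab_opt c r
  rcases le_or_gt ρ 0 with hρ | hρ
  · refine ⟨{O}, by simp, fun i => ⟨O, by simp, ?_⟩⟩
    rw [Metric.mem_closedBall]
    linarith [hO i]
  have hrho := hρ
  -- the unit directions
  let U : ι → EuclideanSpace ℝ (Fin 2) := fun i => (dist O (c i))⁻¹ • (c i - O)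
  let A : Set (EuclideanSpace ℝ (Fin 2)) := U '' {i | dist O (c i) = r i + ρ}
  obtain ⟨u, hu, v, hv, w, hw, l, m, n, hl, hm, hn, hsum, hcomb⟩ :=
    stab_carath A ((Set.toFinite _).image _) (by
      intro v
      obtain ⟨i, hi, hle⟩ := hopt v
      refine ⟨U i, ⟨i, hi, rfl⟩, ?_⟩
      simp only [U]
      rw [inner_smul_right]
      exact mul_nonpos_of_nonneg_of_nonpos (by positivity) hle)
  have hunit : ∀ u ∈ A, u 0 ^ 2 + u 1 ^ 2 = 1 := by
    rintro _ ⟨i, hi, rfl⟩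
    have hi : dist O (c i) = r i + ρ := hi
    have hpos : 0 < dist O (c i) := by rw [hi]; linarith [hr i]
    have : ‖U i‖ = 1 := by
      simp only [U]
      rw [norm_smul, norm_inv, Real.norm_of_nonneg dist_nonneg, dist_eq_norm, norm_sub_rev O,
        inv_mul_cancel₀]
      rw [norm_sub_rev, ← dist_eq_norm]; exact hpos.ne'
    have h2 := EuclideanSpace.norm_sq_eq (U i)
    rw [this] at h2
    simp only [Fin.sum_univ_two, Real.norm_eq_abs, sq_abs] at h2
    linarith
  have hhalf : ∀ u ∈ A, ∀ j, -(r j - ρ) ≤ (c j 0 - O 0) * u 0 + (c j 1 - O 1) * u 1 := by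
    rintro _ ⟨i, hi, rfl⟩ j
    have hi : dist O (c i) = r i + ρ := hi
    have hpos : 0 < dist O (c i) := by rw [hi]; linarith [hr i]
    have hd : dist (c i) (c j) ≤ r i + r j := by
      obtain ⟨z, hz1, hz2⟩ := hint i j
      rw [Metric.mem_closedBall] at hz1 hz2
      have := dist_triangle_left (c i) (c j) z
      linarith
    have hn1 := hunit (U i) ⟨i, hi, rfl⟩
    have hnorm : ‖U i‖ = 1 := by
      have h2 := EuclideanSpace.norm_sq_eq (U i)
      simp only [Fin.sum_univ_two, Real.norm_eq_abs, sq_abs] at h2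
      rw [hn1] at h2
      nlinarith [norm_nonneg (U i)]
    have hcs := real_inner_le_norm (c i - c j) (U i)
    rw [hnorm, mul_one, ← dist_eq_norm] at hcs
    have e1 : inner ℝ (c i - O) (U i) = dist O (c i) := by
      simp only [U]
      rw [inner_smul_right, real_inner_self_eq_norm_sq, ← dist_eq_norm, dist_comm (c i)]
      field_simp
    have e2 : inner ℝ (c j - O) (U i) = inner ℝ (c i - O) (U i) - inner ℝ (c i - c j) (U i) := by
      rw [← inner_sub_left]; congr 1; abel
    have e3 : inner ℝ (c j - O) (U i) = (c j 0 - O 0) * U i 0 + (c j 1 - O 1) * U i 1 := by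
      rw [PiLp.inner_apply]
      simp [Fin.sum_univ_two, mul_comm]
    rw [← e3, e2, e1]
    linarith
  obtain ⟨e, f, hef, hax⟩ := stab_axis (u 0) (u 1) (v 0) (v 1) (w 0) (w 1) l m n (hunit u hu)
    (hunit v hv) (hunit w hw) hl hm hn hsum
    (by simpa using congrArg (fun z : EuclideanSpace ℝ (Fin 2) => z 0) hcomb)
    (by simpa using congrArg (fun z : EuclideanSpace ℝ (Fin 2) => z 1) hcomb)
  have hmem : ∀ (a b : ℝ) (j : ι),
      (c j 0 - O 0 - a) ^ 2 + (c j 1 - O 1 - b) ^ 2 ≤ r j ^ 2 →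
      (!₂[O 0 + a, O 1 + b] : EuclideanSpace ℝ (Fin 2)) ∈ Metric.closedBall (c j) (r j) := by
    intro a b j h
    rw [Metric.mem_closedBall, EuclideanSpace.dist_eq, Real.sqrt_le_left (hr j).le]
    simp only [Fin.sum_univ_two, Real.dist_eq, sq_abs]
    simp
    linarith
  refine ⟨{!₂[O 0 + 0, O 1 + 0], !₂[O 0 + 2 * ρ * f, O 1 + -(2 * ρ * e)],
    !₂[O 0 + -(2 * ρ * f), O 1 + 2 * ρ * e],
    !₂[O 0 + 5 / 2 * ρ * e, O 1 + 5 / 2 * ρ * f],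
    !₂[O 0 + -(5 / 2 * ρ * e), O 1 + -(5 / 2 * ρ * f)]}, Finset.card_le_five, ?_⟩
  intro j
  obtain ⟨x, hx⟩ : ∃ x, x = c j 0 - O 0 := ⟨_, rfl⟩
  obtain ⟨y, hy⟩ : ∃ y, y = c j 1 - O 1 := ⟨_, rfl⟩
  obtain ⟨hs, hdich⟩ := hax x y (r j - ρ) (by rw [hx, hy]; exact hhalf u hu j)
    (by rw [hx, hy]; exact hhalf v hv j) (by rw [hx, hy]; exact hhalf w hw j)
  have hm' : ∀ a b : ℝ, (x - a) ^ 2 + (y - b) ^ 2 ≤ r j ^ 2 →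
      (!₂[O 0 + a, O 1 + b] : EuclideanSpace ℝ (Fin 2)) ∈ Metric.closedBall (c j) (r j) := by
    intro a b h
    exact hmem a b j (by rw [← hx, ← hy]; exact h)
  have hfar : x ^ 2 + y ^ 2 ≤ (r j + ρ) ^ 2 := by
    have h1 := pow_le_pow_left₀ dist_nonneg (hO j) 2
    rw [EuclideanSpace.dist_eq, Real.sq_sqrt (by positivity)] at h1
    simp only [Fin.sum_univ_two, Real.dist_eq, sq_abs] at h1
    rw [hx, hy]
    linarith
  by_cases h0 : x ^ 2 + y ^ 2 ≤ r j ^ 2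
  · exact ⟨_, by simp, hm' 0 0 (by simpa using h0)⟩
  push Not at h0
  have hrot : (x * f - y * e) ^ 2 + (x * e + y * f) ^ 2 = x ^ 2 + y ^ 2 := by
    linear_combination (x ^ 2 + y ^ 2) * hef
  rcases stab_geom_scaled (x * f - y * e) (x * e + y * f) (r j) ρ hρ (by linarith)
    (by rw [hrot]; exact h0) (by rw [hrot]; exact hfar) (by rw [hrot]; exact hdich)
    with h | h | h | h
  · refine ⟨_, by simp, hm' (2 * ρ * f) (-(2 * ρ * e)) ?_⟩
    linear_combination h - hrot + 4 * ρ ^ 2 * hef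
  · refine ⟨!₂[O 0 + -(2 * ρ * f), O 1 + 2 * ρ * e], by simp, hm' _ _ ?_⟩
    linear_combination h - hrot + 4 * ρ ^ 2 * hef
  · refine ⟨!₂[O 0 + 5 / 2 * ρ * e, O 1 + 5 / 2 * ρ * f], by simp, hm' _ _ ?_⟩
    linear_combination h - hrot + 25 / 4 * ρ ^ 2 * hef
  · refine ⟨!₂[O 0 + -(5 / 2 * ρ * e), O 1 + -(5 / 2 * ρ * f)], by simp, hm' _ _ ?_⟩
    linear_combination h - hrot + 25 / 4 * ρ ^ 2 * hef
end

section
/- Let D₁ and D₂ be closed disks in ℝ² with centers c₁ ≠ c₂ and radii r₁ ≥ r₂ > 0, whose boundary circles intersect at a point u with angle ∠c₁ u c₂ at least 2π/3. Then there exists a set P of at most four points in ℝ² such that every closed disk F of radius at least r₁ that intersects both D₁ and D₂ contains at least one point of P. -/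
lemma core_aux (ρ l H R x y : ℝ) (hρ : ρ ≤ 1) (hρ0 : 0 < ρ) (hH0 : 0 ≤ H) (hH : H ≤ 1) (hl : ρ / 2 ≤ l)
    (h2 : 2 * ρ + H ≤ 1 + 2 * l) (hR : 1 ≤ R) (hx : 0 ≤ x) (hy : 0 ≤ y)
    (hS : x ^ 2 + y ^ 2 - R ^ 2 ≤ 2 * R * ρ - 2 * l * x + H) :
    (x - 1) ^ 2 + y ^ 2 ≤ R ^ 2 ∨ x ^ 2 + (y - 1) ^ 2 ≤ R ^ 2 := by
  have hl0 : 0 < l := by linarith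
  -- key bound on the diagonal point
  have key : 2 * R * ρ + H + 1 ≤ (2 + 2 * l) * (1 + 7 / 10 * (R - 1)) := by
    nlinarith [mul_nonneg (sub_nonneg.2 hR) (show (0:ℝ) ≤ 14 / 10 + 14 / 10 * l - 2 * ρ by linarith)]
  have diag : ∀ t : ℝ, 0 ≤ t → t ≤ 1 + 7 / 10 * (R - 1) → 2 * t ^ 2 - 2 * t + 1 ≤ R ^ 2 := by
    intro t ht0 ht
    rcases le_total t 1 with h | h
    · nlinarith
    · nlinarith
  rcases le_total y x with hyx | hxy
  · left
    by_cases hc : 2 * R * ρ + H + 1 ≤ (2 + 2 * l) * x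
    · nlinarith
    · have hxt : x ≤ 1 + 7 / 10 * (R - 1) := by
        by_contra hcon
        push Not at hc hcon
        nlinarith
      nlinarith [diag x hx hxt]
  · right
    by_cases hc : 2 * R * ρ + H + 1 ≤ 2 * l * x + 2 * y
    · nlinarith
    · push Not at hc
      have hxt : x ≤ 1 + 7 / 10 * (R - 1) := by
        by_contra hcon
        push Not at hcon
        nlinarith
      have hRρ : R * ρ ≤ R := by nlinarith
      have hlx : 0 ≤ l * x := by positivity
      set T := (2 * R * ρ + H + 1) / (2 + 2 * l) with hT
      set Y1 := (2 * R * ρ + H + 1) / 2 with hY1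
      have hTe : (2 + 2 * l) * T = 2 * R * ρ + H + 1 := by rw [hT]; field_simp
      have hT0 : 0 < T := by rw [hT]; positivity
      have hTle : T ≤ 1 + 7 / 10 * (R - 1) := by
        rw [hT, div_le_iff₀ (by positivity)]; linarith
      have hdT := diag T hT0.le hTle
      have hxT : x ≤ T := by
        by_contra hcon
        push Not at hcon
        nlinarith
      -- y between x and Y1 - l x; convex in y
      have hY : y ≤ Y1 - l * x := by rw [hY1]; linarith
      have e1 := diag x hx hxt
      have hend : x ^ 2 + (Y1 - l * x - 1) ^ 2 ≤ R ^ 2 := by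
        have h0 : (Y1 - 1) ^ 2 ≤ R ^ 2 := by
          have : 0 < R * ρ := by positivity
          apply sq_le_sq'
          · rw [hY1]; linarith
          · rw [hY1]; linarith
        have hYT : Y1 - l * T = T := by rw [hY1]; linarith
        -- convexity between x = 0 and x = T
        have hb : x ^ 2 + (Y1 - l * x - 1) ^ 2 ≤
            (1 - x / T) * (Y1 - 1) ^ 2 + (x / T) * (T ^ 2 + (Y1 - l * T - 1) ^ 2) := by
          have hs : x / T ≤ 1 := by rw [div_le_one hT0]; exact hxT
          have hs0 : 0 ≤ x / T := by positivity
          obtain ⟨s, hs'⟩ : ∃ s, s = x / T := ⟨_, rfl⟩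
          have hxs : x = s * T := by rw [hs']; field_simp
          rw [← hs'] at hs hs0 ⊢
          rw [hxs]
          nlinarith [mul_nonneg (mul_nonneg hs0 (sub_nonneg.2 hs)) (add_nonneg (sq_nonneg T) (sq_nonneg (l*T)))]
        have hs : x / T ≤ 1 := by rw [div_le_one hT0]; exact hxT
        have hs0 : 0 ≤ x / T := by positivity
        rw [hYT] at hb
        have : T ^ 2 + (T - 1) ^ 2 ≤ R ^ 2 := by linarith
        nlinarith [mul_le_mul_of_nonneg_left h0 (sub_nonneg.2 hs), mul_le_mul_of_nonneg_left this hs0]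
      rcases le_total y 1 with h | h
      · have h8 : (1 - y) ^ 2 ≤ (1 - x) ^ 2 :=
          pow_le_pow_left₀ (by linarith) (by linarith) 2
        linarith
      · have h8 : (y - 1) ^ 2 ≤ (Y1 - l * x - 1) ^ 2 :=
          pow_le_pow_left₀ (by linarith) (by linarith) 2
        linarith

set_option maxHeartbeats 1000000 in
lemma planar_one (r d R X Y : ℝ) (hr0 : 0 < r) (hr : r ≤ 1) (hd : 0 < d)
    (hd1 : d ≤ 1 + r) (hd2 : 1 + r + r ^ 2 ≤ d ^ 2) (hR : 1 ≤ R)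
    (h1 : ((d ^ 2 + 1 - r ^ 2) / (2 * d) + X) ^ 2 + Y ^ 2 ≤ (R + 1) ^ 2)
    (h2 : ((d ^ 2 + 1 - r ^ 2) / (2 * d) + X - d) ^ 2 + Y ^ 2 ≤ (R + r) ^ 2) :
    (X - 1) ^ 2 + Y ^ 2 ≤ R ^ 2 ∨ (X + 1) ^ 2 + Y ^ 2 ≤ R ^ 2 ∨
    X ^ 2 + (Y - 1) ^ 2 ≤ R ^ 2 ∨ X ^ 2 + (Y + 1) ^ 2 ≤ R ^ 2 := by
  obtain ⟨k, hk⟩ : ∃ k, k = (d ^ 2 + 1 - r ^ 2) / (2 * d) := ⟨_, rfl⟩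
  rw [← hk] at h1 h2
  have hkd : 2 * d * k = d ^ 2 + 1 - r ^ 2 := by rw [hk]; field_simp
  obtain ⟨l, hl⟩ : ∃ l, l = d - k := ⟨_, rfl⟩
  have hld : 2 * d * l = d ^ 2 + r ^ 2 - 1 := by rw [hl]; linarith
  have hdh : 1 + r / 2 ≤ d := by
    by_contra hcon
    push Not at hcon
    nlinarith
  obtain ⟨H, hH⟩ : ∃ H, H = 1 - k ^ 2 := ⟨_, rfl⟩
  have hH' : H = r ^ 2 - l ^ 2 := by
    have : k = d - l := by linarith
    rw [hH, this]; nlinarith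
  have hk34 : 3 / 4 ≤ k := by
    by_contra hcon
    push Not at hcon
    nlinarith [mul_pos hd (sub_pos.2 hcon)]
  have hk1 : k ≤ 1 := by
    by_contra hcon
    push Not at hcon
    nlinarith [mul_pos hd (sub_pos.2 hcon)]
  have hH0 : 0 ≤ H := by rw [hH]; nlinarith
  have hH1 : H ≤ 1 := by rw [hH]; nlinarith
  have hlr : r / 2 ≤ l := by
    by_contra hcon
    push Not at hcon
    nlinarith [mul_pos hd (sub_pos.2 hcon)]
  have hl2 : (r + 5 / 4 * r ^ 2) ≤ l * (2 + r) := by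
    have hp : 0 ≤ (d - (1 + r / 2)) * (d * (1 + r / 2) + (1 - r ^ 2)) := by
      apply mul_nonneg (by linarith)
      have : r ^ 2 ≤ 1 := by nlinarith
      have : 0 < d * (1 + r / 2) := by positivity
      linarith
    refine le_of_mul_le_mul_left (a := 2 * d) ?_ (by positivity)
    have : 2 * d * (l * (2 + r)) - 2 * d * (r + 5 / 4 * r ^ 2)
        = 2 * ((d - (1 + r / 2)) * (d * (1 + r / 2) + (1 - r ^ 2))) := by
      linear_combination (2 + r) * hld
    linarith
  have hcr : 2 * r + H ≤ 1 + 2 * l := by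
    rw [hH']
    have h3 : 2 + 2 * r + 5 / 4 * r ^ 2 ≤ (1 + l) * (2 + r) := by linarith
    have h4 : (2 + 2 * r + 5 / 4 * r ^ 2) ^ 2 ≤ ((1 + l) * (2 + r)) ^ 2 :=
      pow_le_pow_left₀ (by positivity) h3 2
    have hr2 : r ^ 2 ≤ 1 := by nlinarith
    have hr3 : r ^ 3 ≤ 1 := by nlinarith
    have h5 : (r ^ 2 + 2 * r) * (2 + r) ^ 2 ≤ (2 + 2 * r + 5 / 4 * r ^ 2) ^ 2 := by
      nlinarith [sq_nonneg (r ^ 2)]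
    have h6 : (r ^ 2 + 2 * r) * (2 + r) ^ 2 ≤ (1 + l) ^ 2 * (2 + r) ^ 2 := by nlinarith
    have h7 := le_of_mul_le_mul_right h6 (by positivity)
    linarith
  rcases le_total 0 X with hX | hX
  · have := core_aux 1 k H R X |Y| le_rfl one_pos hH0 hH1 (by linarith)
      (by rw [hH]; nlinarith) hR hX (abs_nonneg Y) (by rw [sq_abs, hH]; nlinarith)
    rw [sq_abs] at this
    rcases this with h | h
    · exact Or.inl h
    · rcases abs_cases Y with ⟨ha, _⟩ | ⟨ha, _⟩ <;> rw [ha] at h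
      · exact Or.inr (Or.inr (Or.inl h))
      · exact Or.inr (Or.inr (Or.inr (by nlinarith)))
  · have hkl : k = d - l := by linarith
    have := core_aux r l H R (-X) |Y| hr hr0 hH0 hH1 hlr hcr hR (by linarith)
      (abs_nonneg Y) (by rw [sq_abs, hH']; rw [hkl] at h2; nlinarith)
    rw [sq_abs] at this
    rcases this with h | h
    · exact Or.inr (Or.inl (by nlinarith))
    · rcases abs_cases Y with ⟨ha, _⟩ | ⟨ha, _⟩ <;> rw [ha] at h
      · exact Or.inr (Or.inr (Or.inl (by nlinarith)))
      · exact Or.inr (Or.inr (Or.inr (by nlinarith)))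

lemma planar (s r d R X Y : ℝ) (hr0 : 0 < r) (hr : r ≤ s) (hd : 0 < d)
    (hd1 : d ≤ s + r) (hd2 : s ^ 2 + s * r + r ^ 2 ≤ d ^ 2) (hR : s ≤ R)
    (h1 : ((d ^ 2 + s ^ 2 - r ^ 2) / (2 * d) + X) ^ 2 + Y ^ 2 ≤ (R + s) ^ 2)
    (h2 : ((d ^ 2 + s ^ 2 - r ^ 2) / (2 * d) + X - d) ^ 2 + Y ^ 2 ≤ (R + r) ^ 2) :
    (X - s) ^ 2 + Y ^ 2 ≤ R ^ 2 ∨ (X + s) ^ 2 + Y ^ 2 ≤ R ^ 2 ∨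
    X ^ 2 + (Y - s) ^ 2 ≤ R ^ 2 ∨ X ^ 2 + (Y + s) ^ 2 ≤ R ^ 2 := by
  have hs : 0 < s := by linarith
  have hs2 : 0 < s ^ 2 := by positivity
  obtain ⟨r', rfl⟩ : ∃ r', r = s * r' := ⟨r / s, by field_simp⟩
  obtain ⟨d, rfl⟩ : ∃ r', d = s * r' := ⟨d / s, by field_simp⟩
  obtain ⟨R, rfl⟩ : ∃ r', R = s * r' := ⟨R / s, by field_simp⟩
  obtain ⟨X, rfl⟩ : ∃ r', X = s * r' := ⟨X / s, by field_simp⟩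
  obtain ⟨Y, rfl⟩ : ∃ r', Y = s * r' := ⟨Y / s, by field_simp⟩
  have hr0' : 0 < r' := pos_of_mul_pos_right hr0 hs.le
  have hd' : 0 < d := pos_of_mul_pos_right hd hs.le
  have e : ((s * d) ^ 2 + s ^ 2 - (s * r') ^ 2) / (2 * (s * d)) = s * ((d ^ 2 + 1 - r' ^ 2) / (2 * d)) := by
    field_simp
  rw [e] at h1 h2
  have := planar_one r' d R X Y hr0' (le_of_mul_le_mul_left (by linarith) hs) hd'
    (le_of_mul_le_mul_left (by linarith) hs) (le_of_mul_le_mul_left (by linarith) hs2)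
    (le_of_mul_le_mul_left (by linarith) hs) (le_of_mul_le_mul_left (by linarith) hs2)
    (le_of_mul_le_mul_left (by linarith) hs2)
  rcases this with h | h | h | h <;> have h' := mul_le_mul_of_nonneg_left h hs2.le
  · left; linarith
  · right; left; linarith
  · right; right; left; linarith
  · right; right; right; linarith

lemma dist_le_iff_coord (p q : EuclideanSpace ℝ (Fin 2)) (R : ℝ) (hR : 0 ≤ R) :
    dist p q ≤ R ↔ (p 0 - q 0) ^ 2 + (p 1 - q 1) ^ 2 ≤ R ^ 2 := by
  rw [EuclideanSpace.dist_eq, Real.sqrt_le_left hR]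
  simp [Fin.sum_univ_two, Real.dist_eq, sq_abs]

/-- **Lemma (four points stab all large disks meeting two disks with large lens angle).**
Let `D₁`, `D₂` be closed disks with centers `c₁ ≠ c₂` and radii `r₁ ≥ r₂ > 0`, whose
boundary circles meet at a point `u` with lens angle `∠ c₁ u c₂ ≥ 2π/3`.  Then there
is a set `P` of at most four points such that every closed disk `F` of radius at least
`r₁` intersecting both `D₁` and `D₂` contains a point of `P`. -/
theorem four_points_stab_large_disks
    (c₁ c₂ : EuclideanSpace ℝ (Fin 2)) (r₁ r₂ : ℝ)
    (hc : c₁ ≠ c₂) (hr₂ : 0 < r₂) (hr : r₂ ≤ r₁)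
    (u : EuclideanSpace ℝ (Fin 2))
    (hu₁ : dist u c₁ = r₁) (hu₂ : dist u c₂ = r₂)
    (hangle : 2 * Real.pi / 3 ≤ EuclideanGeometry.angle c₁ u c₂) :
    ∃ P : Finset (EuclideanSpace ℝ (Fin 2)), P.card ≤ 4 ∧
      ∀ (f : EuclideanSpace ℝ (Fin 2)) (R : ℝ), r₁ ≤ R →
        (Metric.closedBall f R ∩ Metric.closedBall c₁ r₁).Nonempty →
        (Metric.closedBall f R ∩ Metric.closedBall c₂ r₂).Nonempty →
        ∃ p ∈ P, p ∈ Metric.closedBall f R := by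
  classical
  have hr₁ : 0 < r₁ := by linarith
  obtain ⟨d, hd⟩ : ∃ d, d = dist c₁ c₂ := ⟨_, rfl⟩
  have hd0 : 0 < d := by rw [hd]; exact dist_pos.2 hc
  have hd1 : d ≤ r₁ + r₂ := by
    rw [hd, ← hu₁, ← hu₂, dist_comm u c₁]; exact dist_triangle _ _ _
  have hcos : Real.cos (EuclideanGeometry.angle c₁ u c₂) ≤ - (1 / 2) := by
    have h1 : Real.cos (2 * Real.pi / 3) = - (1 / 2) := by
      rw [show 2 * Real.pi / 3 = Real.pi - Real.pi / 3 by ring, Real.cos_pi_sub, Real.cos_pi_div_three]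
    rw [← h1]
    exact Real.cos_le_cos_of_nonneg_of_le_pi (by positivity) (EuclideanGeometry.angle_le_pi _ _ _) hangle
  have hlaw := EuclideanGeometry.law_cos c₁ u c₂
  rw [dist_comm c₁ u, dist_comm c₂ u, hu₁, hu₂, ← hd] at hlaw
  have hd2 : r₁ ^ 2 + r₁ * r₂ + r₂ ^ 2 ≤ d ^ 2 := by
    nlinarith [mul_le_mul_of_nonneg_left hcos (mul_pos hr₁ hr₂).le]
  have hdsq : (c₂ 0 - c₁ 0) ^ 2 + (c₂ 1 - c₁ 1) ^ 2 = d ^ 2 := by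
    rw [hd, EuclideanSpace.dist_eq, Real.sq_sqrt (by positivity)]
    simp only [Fin.sum_univ_two, Real.dist_eq, sq_abs]
    ring
  obtain ⟨a, ha⟩ : ∃ a, a = (c₂ 0 - c₁ 0) / d := ⟨_, rfl⟩
  obtain ⟨b, hb⟩ : ∃ b, b = (c₂ 1 - c₁ 1) / d := ⟨_, rfl⟩
  have hab : a ^ 2 + b ^ 2 = 1 := by
    rw [ha, hb, div_pow, div_pow, ← add_div, hdsq]; field_simp
  have hc0 : c₂ 0 = c₁ 0 + d * a := by rw [ha]; field_simp; ring
  have hc1 : c₂ 1 = c₁ 1 + d * b := by rw [hb]; field_simp; ring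
  obtain ⟨K, hK⟩ : ∃ K, K = (d ^ 2 + r₁ ^ 2 - r₂ ^ 2) / (2 * d) := ⟨_, rfl⟩
  let pt : ℝ → ℝ → EuclideanSpace ℝ (Fin 2) := fun s t =>
    !₂[c₁ 0 + (K + s) * a - t * b, c₁ 1 + (K + s) * b + t * a]
  refine ⟨{pt r₁ 0, pt (-r₁) 0, pt 0 r₁, pt 0 (-r₁)}, Finset.card_le_four, ?_⟩
  intro f R hR hF1 hF2
  have hR0 : 0 ≤ R := by linarith
  have g1 : dist f c₁ ≤ R + r₁ := by
    obtain ⟨z, hz1, hz2⟩ := hF1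
    rw [Metric.mem_closedBall] at hz1 hz2
    linarith [dist_triangle_left f c₁ z]
  have g2 : dist f c₂ ≤ R + r₂ := by
    obtain ⟨z, hz1, hz2⟩ := hF2
    rw [Metric.mem_closedBall] at hz1 hz2
    linarith [dist_triangle_left f c₂ z]
  rw [dist_le_iff_coord _ _ _ (by linarith)] at g1 g2
  obtain ⟨X, hX⟩ : ∃ X, X = (f 0 - c₁ 0) * a + (f 1 - c₁ 1) * b - K := ⟨_, rfl⟩
  obtain ⟨Y, hY⟩ : ∃ Y, Y = (f 1 - c₁ 1) * a - (f 0 - c₁ 0) * b := ⟨_, rfl⟩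
  have hf0 : f 0 = c₁ 0 + (K + X) * a - Y * b := by
    rw [hX, hY]; linear_combination (-(f 0 - c₁ 0)) * hab
  have hf1 : f 1 = c₁ 1 + (K + X) * b + Y * a := by
    rw [hX, hY]; linear_combination (-(f 1 - c₁ 1)) * hab
  have q : ∀ s t : ℝ, (X - s) ^ 2 + (Y - t) ^ 2 ≤ R ^ 2 → pt s t ∈ Metric.closedBall f R := by
    intro s t h
    rw [Metric.mem_closedBall, dist_le_iff_coord _ _ _ hR0, hf0, hf1]
    simp only [pt, Matrix.cons_val_zero, Matrix.cons_val_one]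
    refine le_trans (le_of_eq ?_) h
    linear_combination ((X - s) ^ 2 + (Y - t) ^ 2) * hab
  have k1 : (K + X) ^ 2 + Y ^ 2 ≤ (R + r₁) ^ 2 := by
    refine le_trans (le_of_eq ?_) g1
    rw [hf0, hf1]
    linear_combination (-((K + X) ^ 2 + Y ^ 2)) * hab
  have k2 : (K + X - d) ^ 2 + Y ^ 2 ≤ (R + r₂) ^ 2 := by
    refine le_trans (le_of_eq ?_) g2
    rw [hf0, hf1, hc0, hc1]
    linear_combination (-((K + X - d) ^ 2 + Y ^ 2)) * hab
  rw [hK] at k1 k2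
  rcases planar r₁ r₂ d R X Y hr₂ hr hd0 hd1 hd2 hR k1 k2 with h | h | h | h
  · exact ⟨pt r₁ 0, by simp, q _ _ (by simpa using h)⟩
  · exact ⟨pt (-r₁) 0, by simp, q _ _ (by simpa using h)⟩
  · exact ⟨pt 0 r₁, by simp, q _ _ (by simpa using h)⟩
  · exact ⟨pt 0 (-r₁), by simp, q _ _ (by simpa using h)⟩
end

section
/- There exists a set of 13 pairwise intersecting closed disks in ℝ² that cannot be stabbed by three points: for every set P of at most three points in ℝ², some disk of the family contains no point of P. -/
/-! ### An explicit configuration of 13 disks with integer centers and radii -/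

/-- First coordinates of the centers. -/
def cX : Fin 13 → ℤ :=
  ![-6367689, 1179110083, 1022772464, 1137707336, 1685663421, 1286735079, 0, -9397293, 2077768762, 1123762053, -9999977, 1029437031, -8071032]

/-- Second coordinates of the centers. -/
def cY : Fin 13 → ℤ :=
  ![7714064, -347626066, -461615920, -1314496442, 0, -1635082167, 0, 3487034, 116832400, -1226790108, -281005, -529997512, 6166799]

/-- Radii. -/
def cR : Fin 13 → ℤ :=
  ![1010000001, 229286164, 122119768, 738470271, 685663422, 1080668369, 1000000001, 1010000001, 1081050898, 663687207, 1010000001, 157859217, 1010000001]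

/-- Triples of disks with empty common intersection, grouped by largest index. -/
def groups : List (List (Fin 13 × Fin 13 × Fin 13)) :=
  [[],
   [],
   [(0, 1, 2)],
   [(0, 1, 3), (0, 2, 3), (1, 2, 3)],
   [(0, 1, 4), (0, 2, 4), (0, 3, 4), (2, 3, 4)],
   [(0, 1, 5), (0, 2, 5), (0, 4, 5), (1, 4, 5), (2, 3, 5)],
   [(0, 3, 6), (0, 5, 6), (1, 2, 6), (1, 3, 6), (1, 4, 6), (1, 5, 6), (2, 3, 6), (2, 4, 6),
    (2, 5, 6), (3, 4, 6), (3, 5, 6)],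
   [(1, 2, 7), (1, 3, 7), (1, 4, 7), (1, 5, 7), (1, 6, 7), (2, 3, 7), (2, 4, 7), (2, 5, 7),
    (2, 6, 7), (3, 4, 7), (4, 5, 7)],
   [(0, 1, 8), (0, 2, 8), (0, 3, 8), (1, 3, 8), (1, 6, 8), (1, 7, 8), (2, 3, 8), (2, 4, 8),
    (2, 5, 8), (2, 6, 8), (2, 7, 8), (3, 6, 8), (3, 7, 8), (4, 6, 8), (4, 7, 8), (5, 6, 8),
    (5, 7, 8)],
   [(0, 3, 9), (0, 8, 9), (1, 2, 9), (1, 6, 9), (1, 7, 9), (1, 8, 9), (2, 4, 9), (2, 6, 9),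
    (2, 7, 9), (3, 4, 9), (3, 6, 9), (4, 6, 9), (5, 7, 9), (7, 8, 9)],
   [(1, 2, 10), (1, 5, 10), (1, 9, 10), (2, 4, 10), (2, 8, 10), (2, 9, 10), (3, 4, 10), (3, 8, 10),
    (4, 6, 10), (6, 8, 10)],
   [(0, 8, 11), (2, 4, 11), (2, 8, 11), (3, 7, 11), (4, 5, 11), (4, 6, 11), (5, 8, 11), (8, 9, 11),
    (9, 10, 11)],
   [(1, 5, 12), (1, 11, 12), (2, 4, 12), (3, 4, 12), (3, 9, 12), (6, 9, 12), (6, 11, 12)]]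

/-- Triples of disks with empty common intersection. -/
def badTriples : List (Fin 13 × Fin 13 × Fin 13) := groups.flatten

/-- Weighted certificate that three disks have no common point. -/
def certificate (w₁ w₂ w₃ : ℤ) (i j k : Fin 13) : Prop :=
  0 ≤ w₁ ∧ 0 ≤ w₂ ∧ 0 ≤ w₃ ∧
  (w₁ * cX i + w₂ * cX j + w₃ * cX k) ^ 2 + (w₁ * cY i + w₂ * cY j + w₃ * cY k) ^ 2 <
    (w₁ + w₂ + w₃) * (w₁ * (cX i ^ 2 + cY i ^ 2 - cR i ^ 2) +
      w₂ * (cX j ^ 2 + cY j ^ 2 - cR j ^ 2) + w₃ * (cX k ^ 2 + cY k ^ 2 - cR k ^ 2))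

instance (w₁ w₂ w₃ : ℤ) (i j k : Fin 13) : Decidable (certificate w₁ w₂ w₃ i j k) := by
  unfold certificate; infer_instance

/-- The weights are the barycentric coordinates of the radical center. -/
def weighted (i j k : Fin 13) : Prop :=
  let x₂ := cX j - cX i
  let y₂ := cY j - cY i
  let x₃ := cX k - cX i
  let y₃ := cY k - cY i
  let u := x₂ ^ 2 + y₂ ^ 2 - cR j ^ 2 + cR i ^ 2
  let v := x₃ ^ 2 + y₃ ^ 2 - cR k ^ 2 + cR i ^ 2
  let d := x₂ * y₃ - y₂ * x₃
  let a := u * y₃ - y₂ * v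
  let b := x₂ * v - u * x₃
  let w₂ := a * y₃ - b * x₃
  let w₃ := x₂ * b - y₂ * a
  certificate (2 * d ^ 2 - w₂ - w₃) w₂ w₃ i j k

instance (i j k : Fin 13) : Decidable (weighted i j k) := by
  unfold weighted; infer_instance

theorem badTriples_weighted : ∀ t ∈ badTriples, weighted t.1 t.2.1 t.2.2 := by
  decide +kernel

theorem pairs_meet : ∀ i j : Fin 13,
    (cX i - cX j) ^ 2 + (cY i - cY j) ^ 2 ≤ (cR i + cR j) ^ 2 := by
  decide +kernel

theorem cR_pos : ∀ i : Fin 13, 0 < cR i := by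
  decide +kernel

theorem centers_injective : ∀ i j : Fin 13, cX i = cX j → i = j := by
  decide +kernel

/-- A triple is monochromatic in a partial coloring (a list of colors). -/
def mono (cs : List (Fin 3)) (t : Fin 13 × Fin 13 × Fin 13) : Bool :=
  match cs[t.2.2.val]? with
  | none => false
  | some c => cs[t.1.val]? == some c && cs[t.2.1.val]? == some c

/-- Backtracking search for a 3-coloring extending a partial coloring. -/
def search : List (List (Fin 13 × Fin 13 × Fin 13)) → List (Fin 3) → Bool
  | [], _ => true
  | g :: gs, cs => [0, 1, 2].any fun c =>
      g.all (fun t => !mono (cs ++ [c]) t) && search gs (cs ++ [c])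

/-- The hypergraph of empty triples is not 3-colorable. -/
theorem search_fails : search groups [] = false := by
  decide +kernel

theorem search_sound (f : Fin 13 → Fin 3)
    (key : ∀ i j k : Fin 13, (i, j, k) ∈ badTriples → ¬ (f i = f j ∧ f j = f k)) :
    ∀ (gs : List (List (Fin 13 × Fin 13 × Fin 13))) (n : ℕ), n + gs.length = 13 →
      (∀ g ∈ gs, g ∈ groups) → search gs ((List.ofFn f).take n) = true := by
  have get : ∀ (n : ℕ) (i : Fin 13) (c : Fin 3),
      ((List.ofFn f).take n)[i.val]? = some c → f i = c := by
    intro n i c h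
    rw [List.getElem?_take] at h
    split_ifs at h
    rw [List.getElem?_ofFn, dif_pos i.isLt] at h
    exact Option.some.inj h
  intro gs
  induction gs with
  | nil => intro n _ _; rfl
  | cons g gs ih =>
    intro n hn hsub
    rw [List.length_cons] at hn
    have hlt : n < 13 := by omega
    have htake : (List.ofFn f).take n ++ [f ⟨n, hlt⟩] = (List.ofFn f).take (n + 1) := by
      rw [List.take_add_one]
      rw [List.getElem?_ofFn, dif_pos hlt]
      rfl
    have h3 : ∀ c : Fin 3, c ∈ ([0, 1, 2] : List (Fin 3)) := by decide
    rw [search, List.any_eq_true]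
    refine ⟨f ⟨n, hlt⟩, h3 _, ?_⟩
    rw [htake, ih (n + 1) (by omega) (fun g' hg' => hsub g' (List.mem_cons_of_mem _ hg')),
      Bool.and_true, List.all_eq_true]
    rintro ⟨i, j, k⟩ ht
    rw [Bool.not_eq_true']
    by_contra hm
    rw [Bool.not_eq_false, mono] at hm
    split at hm
    · simp at hm
    · rename_i c hc
      rw [Bool.and_eq_true, beq_iff_eq, beq_iff_eq] at hm
      have e1 := get _ _ _ hm.1
      have e2 := get _ _ _ hm.2
      have e3 := get _ _ _ hc
      exact key i j k (List.mem_flatten.mpr ⟨g, hsub g List.mem_cons_self, ht⟩)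
        ⟨e1.trans e2.symm, e2.trans e3.symm⟩

theorem no_common_point {i j k : Fin 13} (h : weighted i j k) (x y : ℝ)
    (hi : (x - cX i) ^ 2 + (y - cY i) ^ 2 ≤ (cR i : ℝ) ^ 2)
    (hj : (x - cX j) ^ 2 + (y - cY j) ^ 2 ≤ (cR j : ℝ) ^ 2)
    (hk : (x - cX k) ^ 2 + (y - cY k) ^ 2 ≤ (cR k : ℝ) ^ 2) : False := by
  obtain ⟨w₁, w₂, w₃, h1, h2, h3, h4⟩ :
      ∃ w₁ w₂ w₃ : ℤ, certificate w₁ w₂ w₃ i j k := ⟨_, _, _, h⟩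
  have h1' : (0 : ℝ) ≤ w₁ := by exact_mod_cast h1
  have h2' : (0 : ℝ) ≤ w₂ := by exact_mod_cast h2
  have h3' : (0 : ℝ) ≤ w₃ := by exact_mod_cast h3
  have h4' : ((w₁ * cX i + w₂ * cX j + w₃ * cX k) ^ 2 +
      (w₁ * cY i + w₂ * cY j + w₃ * cY k) ^ 2 : ℝ) <
    (w₁ + w₂ + w₃) * (w₁ * (cX i ^ 2 + cY i ^ 2 - cR i ^ 2) +
      w₂ * (cX j ^ 2 + cY j ^ 2 - cR j ^ 2) + w₃ * (cX k ^ 2 + cY k ^ 2 - cR k ^ 2)) := by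
    exact_mod_cast h4
  generalize (w₁ : ℝ) = a at *
  generalize (w₂ : ℝ) = b at *
  generalize (w₃ : ℝ) = c at *
  have hs : 0 ≤ a + b + c := by positivity
  have e1 := mul_nonneg hs (mul_nonneg h1' (sub_nonneg.mpr hi))
  have e2 := mul_nonneg hs (mul_nonneg h2' (sub_nonneg.mpr hj))
  have e3 := mul_nonneg hs (mul_nonneg h3' (sub_nonneg.mpr hk))
  have e4 := sq_nonneg ((a + b + c) * x - (a * cX i + b * cX j + c * cX k))
  have e5 := sq_nonneg ((a + b + c) * y - (a * cY i + b * cY j + c * cY k))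
  linarith

/-- The disks. -/
noncomputable def theDisk (i : Fin 13) : EuclideanSpace ℝ (Fin 2) × ℝ :=
  (!₂[(cX i : ℝ), (cY i : ℝ)], (cR i : ℝ))

theorem theDisk_injective : Function.Injective theDisk := by
  intro i j h
  have h0 : (theDisk i).1 0 = (theDisk j).1 0 := by rw [h]
  simp only [theDisk] at h0
  apply centers_injective
  simpa using h0

theorem mem_theDisk {i : Fin 13} {p : EuclideanSpace ℝ (Fin 2)}
    (h : p ∈ Metric.closedBall (theDisk i).1 (theDisk i).2) :
    (p 0 - cX i) ^ 2 + (p 1 - cY i) ^ 2 ≤ (cR i : ℝ) ^ 2 := by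
  have hr : (0 : ℝ) ≤ cR i := by exact_mod_cast (cR_pos i).le
  rw [Metric.mem_closedBall, EuclideanSpace.dist_eq] at h
  simp only [theDisk, Fin.sum_univ_two, Real.dist_eq, sq_abs] at h
  have := (Real.sqrt_le_left hr).mp h
  simpa using this

theorem theDisk_meet (i j : Fin 13) :
    (Metric.closedBall (theDisk i).1 (theDisk i).2 ∩
      Metric.closedBall (theDisk j).1 (theDisk j).2).Nonempty := by
  have hi : (0 : ℝ) ≤ cR i := by exact_mod_cast (cR_pos i).le
  have hj : (0 : ℝ) ≤ cR j := by exact_mod_cast (cR_pos j).le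
  have hp : ((cX i - cX j) ^ 2 + (cY i - cY j) ^ 2 : ℝ) ≤ (cR j + cR i) ^ 2 := by
    rw [add_comm (cR j : ℝ)]
    exact_mod_cast pairs_meet i j
  have hd : dist (theDisk i).1 (theDisk j).1 ≤ cR j + cR i := by
    rw [EuclideanSpace.dist_eq]
    simp only [theDisk, Fin.sum_univ_two, Real.dist_eq, sq_abs]
    apply (Real.sqrt_le_left (by positivity)).mpr
    simpa using hp
  obtain ⟨y, h1, h2⟩ := exists_dist_le_le hi hj hd
  exact ⟨y, by rw [Metric.mem_closedBall, dist_comm]; exact h1, h2⟩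

/-- **A lower bound with 13 disks.**
There is a set of 13 pairwise intersecting closed disks in `ℝ²` (given by their
centers and positive radii) that cannot be stabbed by three points: for every set `P`
of at most three points, some disk of the family contains no point of `P`. -/
theorem thirteen_disks_not_stabbed_by_three_points :
    ∃ 𝒟 : Finset (EuclideanSpace ℝ (Fin 2) × ℝ),
      𝒟.card = 13 ∧
      (∀ D ∈ 𝒟, 0 < D.2) ∧
      (∀ D ∈ 𝒟, ∀ D' ∈ 𝒟,
        (Metric.closedBall D.1 D.2 ∩ Metric.closedBall D'.1 D'.2).Nonempty) ∧
      ∀ P : Finset (EuclideanSpace ℝ (Fin 2)), P.card ≤ 3 →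
        ∃ D ∈ 𝒟, ∀ p ∈ P, p ∉ Metric.closedBall D.1 D.2 := by
  refine ⟨Finset.univ.map ⟨theDisk, theDisk_injective⟩, by simp, ?_, ?_, ?_⟩
  · intro D hD
    obtain ⟨i, -, rfl⟩ := Finset.mem_map.mp hD
    have := cR_pos i
    simp only [theDisk, Function.Embedding.coeFn_mk]
    exact_mod_cast this
  · intro D hD D' hD'
    obtain ⟨i, -, rfl⟩ := Finset.mem_map.mp hD
    obtain ⟨j, -, rfl⟩ := Finset.mem_map.mp hD'
    exact theDisk_meet i j
  · intro P hP
    by_contra! hcon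
    have hex : ∀ i : Fin 13, ∃ p ∈ P, p ∈ Metric.closedBall (theDisk i).1 (theDisk i).2 := by
      intro i
      exact hcon (theDisk i) (Finset.mem_map.mpr ⟨i, Finset.mem_univ _, rfl⟩)
    choose q hqP hq using hex
    let f : Fin 13 → Fin 3 := fun i => Fin.castLE hP (P.equivFin ⟨q i, hqP i⟩)
    have hf : ∀ i j, f i = f j → q i = q j := by
      intro i j h
      have h' := P.equivFin.injective (Fin.castLE_injective hP h)
      exact congrArg Subtype.val h'
    have key : ∀ i j k : Fin 13, (i, j, k) ∈ badTriples → ¬ (f i = f j ∧ f j = f k) := by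
      rintro i j k hb ⟨h1, h2⟩
      have e1 := hf _ _ h1
      have e2 := hf _ _ h2
      have m1 := mem_theDisk (hq i)
      have m2 := mem_theDisk (hq j)
      have m3 := mem_theDisk (hq k)
      rw [e1, e2] at m1
      rw [e2] at m2
      exact no_common_point (badTriples_weighted _ hb) _ _ m1 m2 m3
    have h1 := search_sound f key groups 0 rfl (fun _ h => h)
    rw [List.take_zero, search_fails] at h1
    exact absurd h1 (by decide)
end
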